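/- Let n ≥ 2, let σ be the surface measure on the unit sphere S^{n-1} ⊂ ℝⁿ with N := σ(S^{n-1}), let c > 0, and let φ : ℝⁿ → ℝ be twice continuously differentiable. For ε ≠ 0 define φ^ε(x,v) := φ(x) − ε·c·⟨v, ∇φ(x)⟩. Then for all x ∈ ℝⁿ, v ∈ S^{n-1} and ε ≠ 0: ε⁻²·[ (1/N)∫_{S^{n-1}} φ^ε(x,w) dσ(w) − φ^ε(x,v) ] − ε⁻¹·c·⟨v, ∇_x φ^ε(x,v)⟩ = c²·D²φ(x)[v,v]. Consequently, if the second derivatives of φ are bounded in norm by M, then |ε⁻²Qφ^ε − ε⁻¹c⟨v,∇_xφ^ε⟩| ≤ c²·M uniformly in x, v and ε ≠ 0. -/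

import Mathlib

open MeasureTheory Real
open scoped InnerProductSpace

/-- Surface measure on spheres in `ℝⁿ`: the `(n−1)`-dimensional Hausdorff measure. -/
noncomputable def sphMeasure (n : ℕ) : Measure (EuclideanSpace ℝ (Fin n)) :=
  μH[(n : ℝ) - 1]

/-- Total surface measure `N = σ(S^{n-1})` of the unit sphere. -/
noncomputable def sphN (n : ℕ) : ℝ :=
  (sphMeasure n (Metric.sphere (0 : EuclideanSpace ℝ (Fin n)) 1)).toReal

/-- The first-order perturbed test function `φ^ε(x,v) = φ(x) − εc⟨v,∇φ(x)⟩`. -/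
noncomputable def phiEps1 {n : ℕ} (c ε : ℝ) (φ : EuclideanSpace ℝ (Fin n) → ℝ)
    (x v : EuclideanSpace ℝ (Fin n)) : ℝ :=
  φ x - ε * c * ⟪v, gradient φ x⟫_ℝ

/-!
On a linear function of the direction the averaging part of `Q` vanishes, because the surface
measure is finite, nonzero and invariant under `w ↦ -w`; hence `Qφ^ε = εc⟨v, ∇φ⟩`. On the other
hand `Sφ^ε = -⟨v, ∇φ⟩ + εc D²φ[v,v]`, so the terms of order `ε⁻¹` in `ε⁻²Qφ^ε + ε⁻¹cSφ^ε` cancel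
and `c²D²φ[v,v]` is left. Finiteness of the surface measure comes from the smooth inverse
stereographic charts, positivity from the orthogonal projection of the sphere onto a unit ball of
codimension one.
-/

open Filter Topology
open Module (finrank)
open scoped Gradient

section SphereMeasure

theorem hausdorffMeasure_image_lt_top_of_isCompact {E F : Type*}
    [NormedAddCommGroup E] [NormedSpace ℝ E] [FiniteDimensional ℝ E]
    [MeasurableSpace E] [BorelSpace E]
    [NormedAddCommGroup F] [NormedSpace ℝ F] [MeasurableSpace F] [BorelSpace F]
    {f : E → F} (hf : ContDiff ℝ 1 f) {s : Set E} (hs : IsCompact s) :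
    μH[finrank ℝ E] (f '' s) < ⊤ := by
  obtain ⟨K, hK⟩ := hf.locallyLipschitz.locallyLipschitzOn.exists_lipschitzOnWith_of_compact hs
  have hdim : (0 : ℝ) ≤ finrank ℝ E := Nat.cast_nonneg _
  exact (hK.hausdorffMeasure_image_le hdim).trans_lt <|
    ENNReal.mul_lt_top (ENNReal.rpow_lt_top_of_nonneg hdim ENNReal.coe_ne_top) hs.measure_lt_top

variable {E : Type*} [NormedAddCommGroup E] [InnerProductSpace ℝ E]

theorem exists_contDiff_image_closedBall_mem_nhdsWithin_sphere {x : E}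
    (hx : x ∈ Metric.sphere (0 : E) 1) :
    ∃ f : (ℝ ∙ (-x))ᗮ → E, ContDiff ℝ 1 f ∧
      f '' Metric.closedBall 0 1 ∈ 𝓝[Metric.sphere 0 1] x := by
  have hnx : ‖-x‖ = 1 := by simpa using hx
  have hstereo : stereographic hnx ⟨x, hx⟩ = 0 := stereographic_neg_apply ⟨x, hx⟩
  have hsymm : (stereographic hnx).symm 0 = ⟨x, hx⟩ := by
    rw [← hstereo]
    refine (stereographic hnx).left_inv ?_
    simpa [Subtype.ext_iff] using ne_neg_of_mem_unit_sphere ℝ ⟨x, hx⟩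
  refine ⟨fun y => (stereographic hnx).symm y,
    contDiff_stereoInvFunAux.comp (ℝ ∙ (-x))ᗮ.subtypeL.contDiff, ?_⟩
  have hball : (stereographic hnx).symm '' Metric.closedBall 0 1 ∈ 𝓝 ⟨x, hx⟩ := by
    rw [← hsymm]
    exact (isOpenEmbedding_stereographic_symm hnx).isOpenMap.image_mem_nhds
      (Metric.closedBall_mem_nhds 0 one_pos)
  rw [← map_nhds_subtype_val ⟨x, hx⟩]
  simpa only [Set.image_image] using image_mem_map hball

theorem closedBall_subset_orthogonalProjectionOnto_image_sphere {v : E} (hv : ‖v‖ = 1) :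
    Metric.closedBall 0 1 ⊆
      (ℝ ∙ v)ᗮ.orthogonalProjectionOnto '' Metric.sphere 0 1 := by
  intro y hy
  have hsq : 0 ≤ 1 - ‖y‖ ^ 2 := by simpa using hy
  have horth : ⟪(y : E), √(1 - ‖y‖ ^ 2) • v⟫_ℝ = 0 := by
    rw [inner_smul_right, Submodule.mem_orthogonal_singleton_iff_inner_left.1 y.2, mul_zero]
  refine ⟨y + √(1 - ‖y‖ ^ 2) • v, ?_, ?_⟩
  · rw [mem_sphere_zero_iff_norm, norm_add_eq_sqrt_iff_real_inner_eq_zero.2 horth, norm_smul, hv,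
      mul_one, Real.norm_eq_abs, abs_mul_abs_self, Real.mul_self_sqrt hsq, Submodule.coe_norm,
      ← sq, add_sub_cancel, Real.sqrt_one]
  · rw [map_add, Submodule.orthogonalProjectionOnto_mem_subspace_eq_self, map_smul,
      Submodule.orthogonalProjectionOnto_orthogonalComplement_singleton_eq_zero, smul_zero,
      add_zero]

variable [MeasurableSpace E] [BorelSpace E]

theorem hausdorffMeasure_sphere_lt_top {m : ℕ} (hE : finrank ℝ E = m + 1) :
    μH[m] (Metric.sphere (0 : E) 1) < ⊤ := by
  have : Fact (finrank ℝ E = m + 1) := ⟨hE⟩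
  have : FiniteDimensional ℝ E := .of_fact_finrank_eq_succ m
  refine (isCompact_sphere 0 1).measure_lt_top_of_nhdsWithin fun x hx => ?_
  obtain ⟨f, hf, hfx⟩ := exists_contDiff_image_closedBall_mem_nhdsWithin_sphere hx
  have hfinrank : finrank ℝ (ℝ ∙ (-x))ᗮ = m :=
    Submodule.finrank_orthogonal_span_singleton (neg_ne_zero.2 (ne_zero_of_mem_unit_sphere ⟨x, hx⟩))
  refine ⟨_, hfx, ?_⟩
  simpa only [hfinrank] using
    hausdorffMeasure_image_lt_top_of_isCompact hf (isCompact_closedBall 0 1)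

theorem hausdorffMeasure_sphere_pos {m : ℕ} (hE : finrank ℝ E = m + 1) :
    0 < μH[m] (Metric.sphere (0 : E) 1) := by
  have : FiniteDimensional ℝ E := .of_finrank_eq_succ hE
  have : Nontrivial E := Module.nontrivial_of_finrank_eq_succ hE
  obtain ⟨v, hv⟩ := exists_norm_eq E zero_le_one
  have : Fact (finrank ℝ E = m + 1) := ⟨hE⟩
  have hfinrank : finrank ℝ (ℝ ∙ v)ᗮ = m :=
    Submodule.finrank_orthogonal_span_singleton (norm_ne_zero_iff.1 (hv ▸ one_ne_zero))
  calc (0 : ENNReal)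
      < μH[finrank ℝ (ℝ ∙ v)ᗮ] (Metric.closedBall (0 : (ℝ ∙ v)ᗮ) 1) :=
        Metric.measure_closedBall_pos _ _ one_pos
    _ = μH[m] (Metric.closedBall (0 : (ℝ ∙ v)ᗮ) 1) := by rw [hfinrank]
    _ ≤ μH[m] ((ℝ ∙ v)ᗮ.orthogonalProjectionOnto '' Metric.sphere 0 1) :=
        measure_mono (closedBall_subset_orthogonalProjectionOnto_image_sphere hv)
    _ ≤ μH[m] (Metric.sphere (0 : E) 1) := by
        simpa using (ℝ ∙ v)ᗮ.lipschitzWith_orthogonalProjectionOnto.hausdorffMeasure_image_le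
          (Nat.cast_nonneg m) (Metric.sphere 0 1)

end SphereMeasure

section Centred

variable {E : Type*} [NormedAddCommGroup E] [MeasurableSpace E] [BorelSpace E]

theorem isNegInvariant_hausdorffMeasure_restrict_sphere (d r : ℝ) :
    (μH[d].restrict (Metric.sphere (0 : E) r)).IsNegInvariant where
  neg_eq_self := by
    have h := ((IsometryEquiv.neg E).measurePreserving_hausdorffMeasure d).restrict_preimage
      (Metric.isClosed_sphere (x := (0 : E)) (ε := r)).measurableSet
    have hpre : IsometryEquiv.neg E ⁻¹' Metric.sphere 0 r = Metric.sphere 0 r := by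
      ext w
      simp
    rw [hpre] at h
    exact h.map_eq

theorem integral_id_eq_zero_of_isNegInvariant [NormedSpace ℝ E] (μ : Measure E)
    [μ.IsNegInvariant] : ∫ w, w ∂μ = 0 := by
  have : IsAddTorsionFree E := .of_isTorsionFree ℝ E
  have h := integral_neg_eq_self (fun w : E => w) μ
  rw [integral_neg] at h
  exact neg_eq_self.1 h

end Centred

section Generator

variable {E : Type*} [NormedAddCommGroup E] [InnerProductSpace ℝ E] [CompleteSpace E]

/-- The operator `Qψ(x,v) = (1/N) ∫ ψ(x,w) μ(dw) − ψ(x,v)` of the switching process; the total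
mass `N` of `μ` enters through the average. -/
noncomputable def switchingOperator [MeasurableSpace E] (μ : Measure E) (ψ : E → E → ℝ)
    (x v : E) : ℝ :=
  ⨍ w, ψ x w ∂μ - ψ x v

/-- The transport operator `Sψ(x,v) = −⟨v, ∇ₓψ(x,v)⟩`, the direction `s(θ)` being the variable
`v` itself. -/
noncomputable def transportOperator (ψ : E → E → ℝ) (x v : E) : ℝ :=
  -⟪v, ∇ (fun y => ψ y v) x⟫_ℝ

/-- The generator `L^ε = ε⁻²Q + ε⁻¹cS` of the random evolution with speed `c` whose directions
are drawn from the normalisation of `μ`. -/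
noncomputable def evolutionGenerator [MeasurableSpace E] (μ : Measure E) (c ε : ℝ)
    (ψ : E → E → ℝ) (x v : E) : ℝ :=
  (ε ^ 2)⁻¹ * switchingOperator μ ψ x v + ε⁻¹ * c * transportOperator ψ x v

/-- The perturbed test function `φ + εφ₁` with corrector `φ₁(x,v) = −c⟨v, ∇φ(x)⟩`, extending
`phiEps1` to Hilbert spaces. -/
noncomputable def perturbedTestFunction (c ε : ℝ) (φ : E → ℝ) (x v : E) : ℝ :=
  φ x - ε * c * ⟪v, ∇ φ x⟫_ℝ

theorem average_sub_const_mul_inner [MeasurableSpace E] (μ : Measure E) [IsFiniteMeasure μ]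
    [NeZero μ] (hint : Integrable (fun w => w) μ) (hμ : ∫ w, w ∂μ = 0) (a b : ℝ) (g : E) :
    ⨍ w, (a - b * ⟪w, g⟫_ℝ) ∂μ = a := by
  have hinner : ∫ w, ⟪w, g⟫_ℝ ∂μ = 0 := by
    simp only [real_inner_comm g, integral_inner hint g, hμ, inner_zero_right]
  have hsub : ∫ w, (a - b * ⟪w, g⟫_ℝ) ∂μ = ∫ _, a ∂μ := by
    rw [integral_sub (integrable_const a) ((hint.inner_const g).const_mul b), integral_const_mul,
      hinner, mul_zero, sub_zero]
  rw [average_eq, hsub, ← average_eq, average_const]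

theorem switchingOperator_perturbedTestFunction [MeasurableSpace E] (μ : Measure E)
    [IsFiniteMeasure μ] [NeZero μ] (hint : Integrable (fun w => w) μ) (hμ : ∫ w, w ∂μ = 0)
    (c ε : ℝ) (φ : E → ℝ) (x v : E) :
    switchingOperator μ (perturbedTestFunction c ε φ) x v = ε * c * ⟪v, ∇ φ x⟫_ℝ := by
  simp only [switchingOperator, perturbedTestFunction, average_sub_const_mul_inner μ hint hμ,
    sub_sub_cancel]

theorem hasFDerivAt_perturbedTestFunction (c ε : ℝ) {φ : E → ℝ} {x : E}
    (hφ : ContDiffAt ℝ 2 φ x) (v : E) :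
    HasFDerivAt (fun y => perturbedTestFunction c ε φ y v)
      (fderiv ℝ φ x - (ε * c) • (fderiv ℝ (fderiv ℝ φ) x).flip v) x := by
  have hφ' : HasFDerivAt φ (fderiv ℝ φ x) x := (hφ.differentiableAt two_ne_zero).hasFDerivAt
  have hφ'' : HasFDerivAt (fderiv ℝ φ) (fderiv ℝ (fderiv ℝ φ) x) x :=
    ((hφ.fderiv_right (m := 1) one_add_one_eq_two.le).differentiableAt one_ne_zero).hasFDerivAt
  have hinner (y : E) : ⟪v, ∇ φ y⟫_ℝ = fderiv ℝ φ y v := inner_gradient_right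
  simp only [perturbedTestFunction, hinner]
  have hv : HasFDerivAt (fun y => fderiv ℝ φ y v) ((fderiv ℝ (fderiv ℝ φ) x).flip v) x := by
    simpa using hφ''.clm_apply (hasFDerivAt_const v x)
  exact hφ'.sub (hv.const_mul (ε * c))

theorem transportOperator_perturbedTestFunction (c ε : ℝ) {φ : E → ℝ} {x : E}
    (hφ : ContDiffAt ℝ 2 φ x) (v : E) :
    transportOperator (perturbedTestFunction c ε φ) x v =
      ε * c * iteratedFDeriv ℝ 2 φ x ![v, v] - ⟪v, ∇ φ x⟫_ℝ := by
  rw [transportOperator, inner_gradient_right, inner_gradient_right,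
    (hasFDerivAt_perturbedTestFunction c ε hφ v).fderiv, iteratedFDeriv_two_apply]
  simp

theorem abs_iteratedFDeriv_two_apply_self_le {F : Type*} [NormedAddCommGroup F] [NormedSpace ℝ F]
    (φ : F → ℝ) (x v : F) :
    |iteratedFDeriv ℝ 2 φ x ![v, v]| ≤ ‖iteratedFDeriv ℝ 2 φ x‖ * ‖v‖ ^ 2 := by
  simpa [Fin.prod_univ_two, sq] using (iteratedFDeriv ℝ 2 φ x).le_opNorm ![v, v]

theorem msre_generator_first_order_cancellation_general [MeasurableSpace E] (μ : Measure E)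
    [IsFiniteMeasure μ] [NeZero μ] (hint : Integrable (fun w => w) μ) (hμ : ∫ w, w ∂μ = 0)
    (c : ℝ) {ε : ℝ} (hε : ε ≠ 0) {φ : E → ℝ} {x : E} (hφ : ContDiffAt ℝ 2 φ x) (v : E) :
    evolutionGenerator μ c ε (perturbedTestFunction c ε φ) x v =
        c ^ 2 * iteratedFDeriv ℝ 2 φ x ![v, v] ∧
      |evolutionGenerator μ c ε (perturbedTestFunction c ε φ) x v| ≤
        c ^ 2 * (‖iteratedFDeriv ℝ 2 φ x‖ * ‖v‖ ^ 2) := by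
  have hgen : evolutionGenerator μ c ε (perturbedTestFunction c ε φ) x v =
      c ^ 2 * iteratedFDeriv ℝ 2 φ x ![v, v] := by
    rw [evolutionGenerator, switchingOperator_perturbedTestFunction μ hint hμ,
      transportOperator_perturbedTestFunction c ε hφ]
    field
  refine ⟨hgen, ?_⟩
  rw [hgen, abs_mul, abs_of_nonneg (sq_nonneg c)]
  gcongr
  exact abs_iteratedFDeriv_two_apply_self_le φ x v

end Generator

section SphMeasure

theorem sphMeasure_succ (m : ℕ) : sphMeasure (m + 1) = μH[m] := by
  simp [sphMeasure]

variable (n : ℕ)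

instance isFiniteMeasure_sphMeasure_restrict_sphere [NeZero n] :
    IsFiniteMeasure ((sphMeasure n).restrict (Metric.sphere 0 1)) := by
  obtain ⟨m, rfl⟩ := Nat.exists_eq_succ_of_ne_zero (NeZero.ne n)
  rw [isFiniteMeasure_restrict, sphMeasure_succ]
  exact (hausdorffMeasure_sphere_lt_top finrank_euclideanSpace_fin).ne

instance neZero_sphMeasure_restrict_sphere [NeZero n] :
    NeZero ((sphMeasure n).restrict (Metric.sphere 0 1)) := by
  obtain ⟨m, rfl⟩ := Nat.exists_eq_succ_of_ne_zero (NeZero.ne n)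
  rw [neZero_iff, Ne, Measure.restrict_eq_zero, sphMeasure_succ]
  exact (hausdorffMeasure_sphere_pos finrank_euclideanSpace_fin).ne'

theorem integrableOn_id_sphere_sphMeasure [NeZero n] :
    IntegrableOn (fun w => w) (Metric.sphere 0 1) (sphMeasure n) := by
  refine Integrable.of_bound (C := 1) continuous_id.aestronglyMeasurable ?_
  filter_upwards [ae_restrict_mem Metric.isClosed_sphere.measurableSet] with w hw
  exact (mem_sphere_zero_iff_norm.1 hw).le

theorem setIntegral_id_sphere_sphMeasure : ∫ w in Metric.sphere 0 1, w ∂sphMeasure n = 0 :=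
  have := isNegInvariant_hausdorffMeasure_restrict_sphere
    (E := EuclideanSpace ℝ (Fin n)) ((n : ℝ) - 1) 1
  integral_id_eq_zero_of_isNegInvariant (μH[(n : ℝ) - 1].restrict (Metric.sphere 0 1))

theorem evolutionGenerator_sphMeasure_restrict_sphere (c ε : ℝ)
    (ψ : EuclideanSpace ℝ (Fin n) → EuclideanSpace ℝ (Fin n) → ℝ)
    (x v : EuclideanSpace ℝ (Fin n)) :
    evolutionGenerator ((sphMeasure n).restrict (Metric.sphere 0 1)) c ε ψ x v =
      (ε ^ 2)⁻¹ * ((1 / sphN n) * (∫ w in Metric.sphere 0 1, ψ x w ∂(sphMeasure n)) - ψ x v)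
        - ε⁻¹ * c * ⟪v, gradient (fun y => ψ y v) x⟫_ℝ := by
  rw [evolutionGenerator, switchingOperator, transportOperator, setAverage_eq, mul_neg,
    ← sub_eq_add_neg, one_div, smul_eq_mul]
  rfl

end SphMeasure

/-- Key computation for relative compactness in Theorem 1: applying the MSRE generator
`L^ε = ε⁻²Q + ε⁻¹cS(θ)` to `φ^ε = φ + εφ₁` the singular terms cancel and
`L^εφ^ε = c²D²φ(x)[v,v]`; consequently, if `‖D²φ‖ ≤ M` everywhere then `|L^εφ^ε| ≤ c²M`
uniformly in `x`, `v` and `ε ≠ 0`. -/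
theorem msre_generator_first_order_cancellation (n : ℕ) (hn : 2 ≤ n) (c : ℝ) (hc : 0 < c)
    (φ : EuclideanSpace ℝ (Fin n) → ℝ) (hφ : ContDiff ℝ 2 φ) (M : ℝ) :
    (∀ (x v : EuclideanSpace ℝ (Fin n)),
        v ∈ Metric.sphere (0 : EuclideanSpace ℝ (Fin n)) 1 → ∀ ε : ℝ, ε ≠ 0 →
      (ε ^ 2)⁻¹ * ((1 / sphN n) *
            (∫ w in Metric.sphere (0 : EuclideanSpace ℝ (Fin n)) 1,
              phiEps1 c ε φ x w ∂(sphMeasure n)) - phiEps1 c ε φ x v)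
        - ε⁻¹ * c * ⟪v, gradient (fun y => phiEps1 c ε φ y v) x⟫_ℝ =
      c ^ 2 * iteratedFDeriv ℝ 2 φ x ![v, v]) ∧
    ((∀ x : EuclideanSpace ℝ (Fin n), ‖iteratedFDeriv ℝ 2 φ x‖ ≤ M) →
      ∀ (x v : EuclideanSpace ℝ (Fin n)),
        v ∈ Metric.sphere (0 : EuclideanSpace ℝ (Fin n)) 1 → ∀ ε : ℝ, ε ≠ 0 →
      |(ε ^ 2)⁻¹ * ((1 / sphN n) *
            (∫ w in Metric.sphere (0 : EuclideanSpace ℝ (Fin n)) 1,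
              phiEps1 c ε φ x w ∂(sphMeasure n)) - phiEps1 c ε φ x v)
        - ε⁻¹ * c * ⟪v, gradient (fun y => phiEps1 c ε φ y v) x⟫_ℝ| ≤ c ^ 2 * M) := by
  have : NeZero n := ⟨by lia⟩
  have hgen (x v : EuclideanSpace ℝ (Fin n)) (ε : ℝ) (hε : ε ≠ 0) :=
    msre_generator_first_order_cancellation_general _ (integrableOn_id_sphere_sphMeasure n)
      (setIntegral_id_sphere_sphMeasure n) c hε (hφ.contDiffAt (x := x)) v
  simp only [evolutionGenerator_sphMeasure_restrict_sphere] at hgen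
  refine ⟨fun x v _ ε hε => (hgen x v ε hε).1, fun hM x v hv ε hε => (hgen x v ε hε).2.trans ?_⟩
  rw [mem_sphere_zero_iff_norm.1 hv, one_pow, mul_one]
  exact mul_le_mul_of_nonneg_left (hM x) (sq_nonneg c)
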